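/- Let f : ℝ^n → ℝ^n have f(0) = 0 and Jacobian Df Lipschitz with constant L (in operator norm), let P be a real symmetric positive definite n×n matrix with smallest and largest eigenvalues λ_min(P), λ_max(P) satisfying 2 yᵀP·Df(0)·y ≤ −‖y‖² for all y ∈ ℝ^n, let x⁰ : [0,∞) → ℝ^n be a solution of ẋ⁰ = f(x⁰), and let x¹ : [0,∞) → ℝ^n solve the variational system ẋ¹(t) = Df(x⁰(t))·x¹(t). Define V(t) := x¹(t)ᵀP·x¹(t). Then V satisfies the differential inequality: for all t ≥ 0, dV/dt(t) ≤ ( −1/λ_max(P) + (2λ_max(P)/λ_min(P))·L·‖x⁰(t)‖ )·V(t). -/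

import Mathlib

open Filter MeasureTheory Matrix

lemma aux_bi {n : ℕ} {P : Matrix (Fin n) (Fin n) ℝ} (hP : P.IsHermitian)
    (u v : Fin n → ℝ) : u ⬝ᵥ P.mulVec v = P.mulVec u ⬝ᵥ v := by
  have h : Pᵀ = P := by simpa [Matrix.IsHermitian] using hP
  rw [Matrix.dotProduct_mulVec, ← Matrix.mulVec_transpose, h]

lemma aux_inner {n : ℕ} (x y : EuclideanSpace ℝ (Fin n)) :
    inner ℝ x y = (x : Fin n → ℝ) ⬝ᵥ (y : Fin n → ℝ) := by
  rw [EuclideanSpace.inner_eq_star_dotProduct, dotProduct_comm]; simp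

lemma aux_coef {n : ℕ} {P : Matrix (Fin n) (Fin n) ℝ} (hP : P.IsHermitian)
    (y : EuclideanSpace ℝ (Fin n)) (i : Fin n) :
    inner ℝ (hP.eigenvectorBasis i) (WithLp.toLp 2 (P.mulVec (y : Fin n → ℝ)))
      = hP.eigenvalues i * inner ℝ (hP.eigenvectorBasis i) y := by
  rw [aux_inner, aux_inner]
  change (hP.eigenvectorBasis i : Fin n → ℝ) ⬝ᵥ P.mulVec (y : Fin n → ℝ) = _
  rw [aux_bi hP, hP.mulVec_eigenvectorBasis, smul_dotProduct, smul_eq_mul]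

lemma aux_quad {n : ℕ} {P : Matrix (Fin n) (Fin n) ℝ} (hP : P.IsHermitian)
    (y : EuclideanSpace ℝ (Fin n)) :
    (y : Fin n → ℝ) ⬝ᵥ P.mulVec (y : Fin n → ℝ)
      = ∑ i, hP.eigenvalues i * (inner ℝ (hP.eigenvectorBasis i) y) ^ 2 := by
  have h := hP.eigenvectorBasis.sum_inner_mul_inner y (WithLp.toLp 2 (P.mulVec (y : Fin n → ℝ)))
  rw [aux_inner] at h
  rw [← h]
  refine Finset.sum_congr rfl fun i _ => ?_
  rw [aux_coef, real_inner_comm]; ring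

lemma aux_nsq {n : ℕ} {P : Matrix (Fin n) (Fin n) ℝ} (hP : P.IsHermitian)
    (y : EuclideanSpace ℝ (Fin n)) :
    ‖y‖ ^ 2 = ∑ i, (inner ℝ (hP.eigenvectorBasis i) y) ^ 2 := by
  rw [← hP.eigenvectorBasis.sum_sq_norm_inner_right y]
  simp

lemma aux_norm {n : ℕ} {P : Matrix (Fin n) (Fin n) ℝ} (hP : P.IsHermitian) (M : ℝ) (hM : 0 ≤ M)
    (h0 : ∀ i, 0 ≤ hP.eigenvalues i) (h1 : ∀ i, hP.eigenvalues i ≤ M)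
    (x y : EuclideanSpace ℝ (Fin n)) :
    (x : Fin n → ℝ) ⬝ᵥ P.mulVec (y : Fin n → ℝ) ≤ M * ‖x‖ * ‖y‖ := by
  have hT : ‖(WithLp.toLp 2 (P.mulVec (y : Fin n → ℝ)) : EuclideanSpace ℝ (Fin n))‖ ≤ M * ‖y‖ := by
    refine (sq_le_sq₀ (norm_nonneg _) (by positivity)).1 ?_
    rw [mul_pow, aux_nsq hP, aux_nsq hP y, Finset.mul_sum]
    refine Finset.sum_le_sum fun i _ => ?_
    rw [aux_coef, mul_pow]
    exact mul_le_mul_of_nonneg_right (pow_le_pow_left₀ (h0 i) (h1 i) 2) (sq_nonneg _)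
  have h := real_inner_le_norm x (WithLp.toLp 2 (P.mulVec (y : Fin n → ℝ)))
  rw [aux_inner] at h
  refine h.trans ?_
  nlinarith [norm_nonneg x]

lemma aux_deriv {n : ℕ} {P : Matrix (Fin n) (Fin n) ℝ} (hP : P.IsHermitian)
    (x : ℝ → EuclideanSpace ℝ (Fin n)) (v : EuclideanSpace ℝ (Fin n)) (t : ℝ)
    (hx : HasDerivAt x v t) :
    HasDerivAt (fun s => (x s : Fin n → ℝ) ⬝ᵥ P.mulVec (x s : Fin n → ℝ))
      (2 * ((x t : Fin n → ℝ) ⬝ᵥ P.mulVec (v : Fin n → ℝ))) t := by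
  have hc : ∀ i, HasDerivAt (fun s => x s i) (v i) t := fun i =>
    ((EuclideanSpace.proj i : EuclideanSpace ℝ (Fin n) →L[ℝ] ℝ).hasFDerivAt.comp_hasDerivAt t hx)
  have hm : ∀ i, HasDerivAt (fun s => P.mulVec (x s : Fin n → ℝ) i)
      (P.mulVec (v : Fin n → ℝ) i) t := fun i => by
    simp only [Matrix.mulVec, dotProduct]
    exact HasDerivAt.fun_sum fun j _ => (hc j).const_mul _
  have := HasDerivAt.fun_sum (u := Finset.univ) fun i _ => (hc i).mul (hm i)
  simp only [dotProduct]
  refine this.congr_deriv ?_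
  rw [Finset.sum_add_distrib]
  change (v : Fin n → ℝ) ⬝ᵥ P.mulVec (x t : Fin n → ℝ)
    + (x t : Fin n → ℝ) ⬝ᵥ P.mulVec (v : Fin n → ℝ)
    = 2 * ((x t : Fin n → ℝ) ⬝ᵥ P.mulVec (v : Fin n → ℝ))
  rw [aux_bi hP, dotProduct_comm]; ring

/-- Differential inequality for the Lyapunov function
`V(t) = x¹(t)ᵀ P x¹(t)` along the variational (first-order) system:
`V̇ ≤ (−1/λ_max(P) + (2λ_max(P)/λ_min(P)) L ‖x⁰(t)‖) V`. -/
theorem lyapunov_differential_inequality_variational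
    (n : ℕ)
    (f : EuclideanSpace ℝ (Fin n) → EuclideanSpace ℝ (Fin n))
    (hf0 : f 0 = 0)
    (hfd : Differentiable ℝ f)
    (L : ℝ) (hL : 0 < L)
    (hLip : ∀ x y : EuclideanSpace ℝ (Fin n),
      ‖fderiv ℝ f x - fderiv ℝ f y‖ ≤ L * ‖x - y‖)
    (P : Matrix (Fin n) (Fin n) ℝ)
    (hP : P.IsHermitian) (hPpos : P.PosDef)
    (hPLyap : ∀ y : EuclideanSpace ℝ (Fin n),
      2 * ((y : Fin n → ℝ) ⬝ᵥ P.mulVec (fderiv ℝ f 0 y : Fin n → ℝ)) ≤ -‖y‖ ^ 2)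
    (lmin lmax : ℝ)
    (hlmin : IsLeast (Set.range hP.eigenvalues) lmin)
    (hlmax : IsGreatest (Set.range hP.eigenvalues) lmax)
    -- the nominal trajectory
    (x0 : ℝ → EuclideanSpace ℝ (Fin n))
    (hx0 : ∀ t : ℝ, 0 ≤ t → HasDerivAt x0 (f (x0 t)) t)
    -- a solution of the variational system along the nominal trajectory
    (x1 : ℝ → EuclideanSpace ℝ (Fin n))
    (hx1 : ∀ t : ℝ, 0 ≤ t → HasDerivAt x1 (fderiv ℝ f (x0 t) (x1 t)) t) :
    ∀ t : ℝ, 0 ≤ t →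
      deriv (fun s => (x1 s : Fin n → ℝ) ⬝ᵥ P.mulVec (x1 s : Fin n → ℝ)) t ≤
        (-(1 / lmax) + (2 * lmax / lmin) * L * ‖x0 t‖) *
          ((x1 t : Fin n → ℝ) ⬝ᵥ P.mulVec (x1 t : Fin n → ℝ)) := by
  intro t ht
  rw [(aux_deriv hP x1 _ t (hx1 t ht)).deriv]
  have hpos : ∀ i, 0 < hP.eigenvalues i := hPpos.eigenvalues_pos
  have hmin : 0 < lmin := by obtain ⟨i, rfl⟩ := hlmin.1; exact hpos i
  have hmax : 0 < lmax := by obtain ⟨i, rfl⟩ := hlmax.1; exact hpos i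
  have hle : ∀ i, hP.eigenvalues i ≤ lmax := fun i => hlmax.2 ⟨i, rfl⟩
  have hge : ∀ i, lmin ≤ hP.eigenvalues i := fun i => hlmin.2 ⟨i, rfl⟩
  set y := x1 t with hy
  have hE : ‖fderiv ℝ f (x0 t) - fderiv ℝ f 0‖ ≤ L * ‖x0 t‖ := by
    simpa using hLip (x0 t) 0
  have hEy := (fderiv ℝ f (x0 t) - fderiv ℝ f 0).le_of_opNorm_le hE y
  have hB := aux_norm hP lmax hmax.le (fun i => (hpos i).le) hle y
    ((fderiv ℝ f (x0 t) - fderiv ℝ f 0) y)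
  have hA := hPLyap y
  have hsplit : (y : Fin n → ℝ) ⬝ᵥ P.mulVec (fderiv ℝ f (x0 t) y : Fin n → ℝ)
      = (y : Fin n → ℝ) ⬝ᵥ P.mulVec (fderiv ℝ f 0 y : Fin n → ℝ)
      + (y : Fin n → ℝ) ⬝ᵥ
        P.mulVec ((fderiv ℝ f (x0 t) - fderiv ℝ f 0) y : Fin n → ℝ) := by
    rw [← dotProduct_add, ← Matrix.mulVec_add]
    simp
  have hU : (y : Fin n → ℝ) ⬝ᵥ P.mulVec (y : Fin n → ℝ) ≤ lmax * ‖y‖ ^ 2 := by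
    rw [aux_quad hP, aux_nsq hP, Finset.mul_sum]
    exact Finset.sum_le_sum fun i _ => mul_le_mul_of_nonneg_right (hle i) (sq_nonneg _)
  have hD : lmin * ‖y‖ ^ 2 ≤ (y : Fin n → ℝ) ⬝ᵥ P.mulVec (y : Fin n → ℝ) := by
    rw [aux_quad hP, aux_nsq hP, Finset.mul_sum]
    exact Finset.sum_le_sum fun i _ => mul_le_mul_of_nonneg_right (hge i) (sq_nonneg _)
  rw [hsplit]
  set V := (y : Fin n → ℝ) ⬝ᵥ P.mulVec (y : Fin n → ℝ) with hV
  have h1 : 1 / lmax * V ≤ ‖y‖ ^ 2 := by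
    rw [one_div, inv_mul_le_iff₀ hmax]; exact hU
  have h2 : ‖y‖ ^ 2 ≤ V / lmin := by
    rw [le_div_iff₀ hmin]; linarith
  have h3 : lmax * ‖y‖ * ‖(fderiv ℝ f (x0 t) - fderiv ℝ f 0) y‖
      ≤ lmax * ‖y‖ * (L * ‖x0 t‖ * ‖y‖) := by gcongr
  have h4 : lmax * L * ‖x0 t‖ * ‖y‖ ^ 2 ≤ lmax * L * ‖x0 t‖ * (V / lmin) := by gcongr
  have h5 : (-(1 / lmax) + (2 * lmax / lmin) * L * ‖x0 t‖) * V
      = -(1 / lmax * V) + 2 * (lmax * L * ‖x0 t‖ * (V / lmin)) := by ring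
  rw [h5]
  linarith
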